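/- There exists a positive real number λ such that (r₁, r₂, r₃, r₄, r₅, r₆, r₇, r₈) = λ·(1, c₁₁, c₆c₁₃, c₆c₁₄, c₁₂, c₁₁c₁₂, c₁₃, c₁₄); equivalently, b = a·c₁₁, c = a·c₆·c₁₃, d = a·c₆·c₁₄, and c₉ = c₃·c₁₂, so that the amplitudes r₁,…,r₈ may be replaced by (1, c₁₁, c₆c₁₃, c₆c₁₄, c₁₂, c₁₁c₁₂, c₁₃, c₁₄) up to an overall positive scale factor. -/

import Mathlib

noncomputable section
open Real Complex

namespace Triacontagonal

/-- The golden ratio. -/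
def τ : ℝ := (1 + Real.sqrt 5) / 2

/-- The constant 3^(-1/2) * 5^(-1/4). -/
def k0 : ℝ := (3 : ℝ) ^ (-(1:ℝ)/2) * (5 : ℝ) ^ (-(1:ℝ)/4)

/-- `a` is the positive real with 2a² = 1 + 3^(-1/2)·5^(-1/4)·τ^(3/2). -/
def a : ℝ := Real.sqrt ((1 + k0 * τ ^ ((3:ℝ)/2)) / 2)

/-- `b` is the positive real with 2b² = 1 + 3^(-1/2)·5^(-1/4)·τ^(-3/2). -/
def b : ℝ := Real.sqrt ((1 + k0 * τ ^ (-((3:ℝ)/2))) / 2)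

/-- `c` is the positive real with 2c² = 1 - 3^(-1/2)·5^(-1/4)·τ^(-3/2). -/
def c : ℝ := Real.sqrt ((1 - k0 * τ ^ (-((3:ℝ)/2))) / 2)

/-- `d` is the positive real with 2d² = 1 - 3^(-1/2)·5^(-1/4)·τ^(3/2). -/
def d : ℝ := Real.sqrt ((1 - k0 * τ ^ ((3:ℝ)/2)) / 2)

/-- `cc n = 2 cos(nπ/30)`. -/
def cc (n : ℤ) : ℝ := 2 * Real.cos (n * Real.pi / 30)

def r1 : ℝ := a / cc 9
def r2 : ℝ := b / cc 9
def r3 : ℝ := c / cc 9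
def r4 : ℝ := d / cc 9
def r5 : ℝ := a / cc 3
def r6 : ℝ := b / cc 3
def r7 : ℝ := c / cc 3
def r8 : ℝ := d / cc 3


lemma s5sq : Real.sqrt 5 * Real.sqrt 5 = 5 := Real.mul_self_sqrt (by norm_num)

lemma s3sq : Real.sqrt 3 * Real.sqrt 3 = 3 := Real.mul_self_sqrt (by norm_num)

lemma s5lo : 2 < Real.sqrt 5 := Real.lt_sqrt_of_sq_lt (by norm_num)

lemma s5hi : Real.sqrt 5 < 3 := by
  rw [Real.sqrt_lt' (by norm_num)]; norm_num

def xx : ℝ := Real.sqrt 3 * Real.sin (Real.pi / 5)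

lemma xx_pos : 0 < xx := by
  have := Real.pi_pos
  exact mul_pos (by positivity) (Real.sin_pos_of_pos_of_lt_pi (by positivity) (by linarith))

lemma xx_sq : xx * xx = 3 * (10 - 2 * Real.sqrt 5) / 16 := by
  have h := Real.sin_sq_add_cos_sq (Real.pi / 5)
  rw [Real.cos_pi_div_five] at h
  have h5 := s5sq
  have : xx * xx = (Real.sqrt 3 * Real.sqrt 3) * Real.sin (Real.pi / 5) ^ 2 := by
    unfold xx; ring
  rw [this, s3sq]
  linear_combination 3 * h - 3 / 16 * h5

lemma cos72 : Real.cos (2 * (Real.pi / 5)) = (Real.sqrt 5 - 1) / 4 := by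
  rw [Real.cos_two_mul, Real.cos_pi_div_five]
  linear_combination (1 / 8) * s5sq

lemma ww : Real.sqrt 3 * Real.sin (2 * (Real.pi / 5)) = xx * (1 + Real.sqrt 5) / 2 := by
  rw [Real.sin_two_mul, Real.cos_pi_div_five]; unfold xx; ring

lemma cc_sq (n : ℤ) : cc n * cc n = 2 + 2 * Real.cos (2 * (n * Real.pi / 30)) := by
  rw [Real.cos_two_mul]; unfold cc; ring

lemma cc_pos (n : ℤ) (h0 : 0 < n) (h1 : n < 15) : 0 < cc n := by
  have hp := Real.pi_pos
  have h0' : (0 : ℝ) < n := by exact_mod_cast h0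
  have h1' : (n : ℝ) < 15 := by exact_mod_cast h1
  have h2 : 0 < (n : ℝ) * Real.pi := by positivity
  have h3 : (n : ℝ) * Real.pi < 15 * Real.pi := mul_lt_mul_of_pos_right h1' hp
  exact mul_pos two_pos (Real.cos_pos_of_mem_Ioo ⟨by linarith, by linarith⟩)

lemma cc11 : cc 11 * cc 11 =
    2 + (Real.sqrt 5 - 1) / 4 - xx * (1 + Real.sqrt 5) / 2 := by
  rw [cc_sq]
  have : (2 * (((11 : ℤ) : ℝ) * Real.pi / 30)) = Real.pi / 3 + 2 * (Real.pi / 5) := by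
    push_cast; ring
  rw [this, Real.cos_add, cos72, Real.cos_pi_div_three, Real.sin_pi_div_three]
  linear_combination - ww

lemma cc13 : cc 13 * cc 13 = 2 - (1 + Real.sqrt 5) / 4 - xx := by
  rw [cc_sq]
  have : (2 * (((13 : ℤ) : ℝ) * Real.pi / 30)) = Real.pi - (Real.pi / 3 - Real.pi / 5) := by
    push_cast; ring
  rw [this, Real.cos_pi_sub, Real.cos_sub, Real.cos_pi_div_five, Real.cos_pi_div_three,
    Real.sin_pi_div_three]
  unfold xx; ring

lemma cc14 : cc 14 * cc 14 =
    2 - (Real.sqrt 5 - 1) / 4 - xx * (1 + Real.sqrt 5) / 2 := by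
  rw [cc_sq]
  have : (2 * (((14 : ℤ) : ℝ) * Real.pi / 30)) =
      Real.pi - (Real.pi / 3 - 2 * (Real.pi / 5)) * (-1) := by
    push_cast; ring
  rw [this, Real.cos_pi_sub, mul_neg_one, Real.cos_neg, Real.cos_sub, cos72,
    Real.cos_pi_div_three, Real.sin_pi_div_three]
  linear_combination - ww

lemma cc6 : cc 6 = (1 + Real.sqrt 5) / 2 := by
  unfold cc
  have : (((6 : ℤ) : ℝ) * Real.pi / 30) = Real.pi / 5 := by push_cast; ring
  rw [this, Real.cos_pi_div_five]; ring

lemma cc12 : cc 12 = (Real.sqrt 5 - 1) / 2 := by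
  unfold cc
  have : (((12 : ℤ) : ℝ) * Real.pi / 30) = 2 * (Real.pi / 5) := by push_cast; ring
  rw [this, cos72]; ring

lemma cc9 : cc 9 = cc 3 * cc 12 := by
  unfold cc
  have e1 : (((9 : ℤ) : ℝ) * Real.pi / 30) =
    ((12 : ℤ) : ℝ) * Real.pi / 30 - ((3 : ℤ) : ℝ) * Real.pi / 30 := by push_cast; ring
  have h : Real.cos (((12 : ℤ) : ℝ) * Real.pi / 30 + ((3 : ℤ) : ℝ) * Real.pi / 30) = 0 := by
    rw [← Real.cos_pi_div_two]; congr 1; push_cast; ring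
  rw [Real.cos_add] at h
  rw [e1, Real.cos_sub]
  linear_combination (-2) * h

lemma tau_pos : 0 < τ := by
  unfold τ; positivity

lemma k0_pos : 0 < k0 := by
  unfold k0; positivity

lemma k0_sq : k0 * k0 * (3 * Real.sqrt 5) = 1 := by
  have h3 : (3 : ℝ) ^ (-(1:ℝ)/2) * (3 : ℝ) ^ (-(1:ℝ)/2) * 3 = 1 := by
    rw [← Real.rpow_add (by norm_num), ← Real.rpow_add_one (by norm_num)]
    norm_num
  have h5 : (5 : ℝ) ^ (-(1:ℝ)/4) * (5 : ℝ) ^ (-(1:ℝ)/4) * Real.sqrt 5 = 1 := by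
    rw [Real.sqrt_eq_rpow, ← Real.rpow_add (by norm_num), ← Real.rpow_add (by norm_num)]
    norm_num
  unfold k0
  linear_combination h3 * ((5 : ℝ) ^ (-(1:ℝ)/4) * (5 : ℝ) ^ (-(1:ℝ)/4) * Real.sqrt 5) + h5

lemma tau_sq : τ ^ ((3:ℝ)/2) * τ ^ ((3:ℝ)/2) = 2 + Real.sqrt 5 := by
  rw [← Real.rpow_add tau_pos]
  have : (3:ℝ)/2 + 3/2 = ((3 : ℕ) : ℝ) := by norm_num
  rw [this, Real.rpow_natCast]
  unfold τ
  linear_combination (3 / 8 + Real.sqrt 5 / 8) * s5sq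

lemma K_eq : k0 * τ ^ ((3:ℝ)/2) = xx * (5 + 3 * Real.sqrt 5) / 15 := by
  have hx := xx_pos
  have hk := k0_pos
  have ht : 0 < τ ^ ((3:ℝ)/2) := Real.rpow_pos_of_pos tau_pos _
  have h5 : 0 < Real.sqrt 5 := by positivity
  rw [← sq_eq_sq₀ (by positivity) (by positivity)]
  have hk2 : k0 * k0 = Real.sqrt 5 / 15 := by
    linear_combination Real.sqrt 5 / 15 * k0_sq - k0 * k0 / 5 * s5sq
  have e1 : (k0 * τ ^ ((3:ℝ)/2)) ^ 2 = (k0 * k0) * (τ ^ ((3:ℝ)/2) * τ ^ ((3:ℝ)/2)) := by ring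
  have e2 : (xx * (5 + 3 * Real.sqrt 5) / 15) ^ 2 =
    (xx * xx) * (25 + 30 * Real.sqrt 5 + 9 * (Real.sqrt 5 * Real.sqrt 5)) / 225 := by ring
  rw [e1, e2, hk2, tau_sq, xx_sq, s5sq]
  linear_combination (7 / 60) * s5sq

lemma L_eq : k0 * τ ^ (-((3:ℝ)/2)) = xx * (5 - Real.sqrt 5) / 15 := by
  have ht : 0 < τ ^ ((3:ℝ)/2) := Real.rpow_pos_of_pos tau_pos _
  have h : τ ^ (-((3:ℝ)/2)) = τ ^ ((3:ℝ)/2) * (Real.sqrt 5 - 2) := by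
    rw [Real.rpow_neg tau_pos.le]
    apply inv_eq_of_mul_eq_one_right
    linear_combination (Real.sqrt 5 - 2) * tau_sq + s5sq
  rw [h]
  linear_combination (Real.sqrt 5 - 2) * K_eq + xx / 5 * s5sq

lemma key {A B y : ℝ} (hA : 0 ≤ A) (hy : 0 ≤ y) (h : B = A * (y * y)) :
    Real.sqrt B = Real.sqrt A * y := by
  rw [h, Real.sqrt_mul hA, Real.sqrt_mul_self hy]

lemma A_pos : 0 < (1 + k0 * τ ^ ((3:ℝ)/2)) / 2 := by
  have := Real.rpow_pos_of_pos tau_pos ((3:ℝ)/2)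
  have := k0_pos
  positivity

lemma hb : b = a * cc 11 := by
  unfold b a
  refine key A_pos.le (cc_pos 11 (by norm_num) (by norm_num)).le ?_
  rw [cc11, K_eq, L_eq]
  have h5 := s5sq
  have hx := xx_sq
  grind

lemma hc : c = a * cc 6 * cc 13 := by
  unfold c a
  rw [mul_assoc]
  refine key A_pos.le (mul_pos (cc_pos 6 (by norm_num) (by norm_num))
    (cc_pos 13 (by norm_num) (by norm_num))).le ?_
  rw [mul_mul_mul_comm, cc13, cc6, K_eq, L_eq]
  have h5 := s5sq
  have hx := xx_sq
  grind

lemma hd : d = a * cc 6 * cc 14 := by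
  unfold d a
  rw [mul_assoc]
  refine key A_pos.le (mul_pos (cc_pos 6 (by norm_num) (by norm_num))
    (cc_pos 14 (by norm_num) (by norm_num))).le ?_
  rw [mul_mul_mul_comm, cc14, cc6, K_eq]
  have h5 := s5sq
  have hx := xx_sq
  grind

/-- (r₁,…,r₈) = λ·(1, c₁₁, c₆c₁₃, c₆c₁₄, c₁₂, c₁₁c₁₂, c₁₃, c₁₄) for some
λ > 0; equivalently b = a·c₁₁, c = a·c₆·c₁₃, d = a·c₆·c₁₄ and c₉ = c₃·c₁₂. -/
theorem stmt14 :
    (∃ lam : ℝ, 0 < lam ∧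
      r1 = lam * 1 ∧ r2 = lam * cc 11 ∧ r3 = lam * (cc 6 * cc 13) ∧
      r4 = lam * (cc 6 * cc 14) ∧ r5 = lam * cc 12 ∧ r6 = lam * (cc 11 * cc 12) ∧
      r7 = lam * cc 13 ∧ r8 = lam * cc 14) ∧
    b = a * cc 11 ∧ c = a * cc 6 * cc 13 ∧ d = a * cc 6 * cc 14 ∧
    cc 9 = cc 3 * cc 12 := by
  refine ⟨⟨a / cc 9, ?_, ?_⟩, hb, hc, hd, cc9⟩
  · exact div_pos (Real.sqrt_pos.2 A_pos) (cc_pos 9 (by norm_num) (by norm_num))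
  have h3 : cc 3 ≠ 0 := (cc_pos 3 (by norm_num) (by norm_num)).ne'
  have h12 : cc 12 ≠ 0 := (cc_pos 12 (by norm_num) (by norm_num)).ne'
  have h6 : cc 6 * cc 12 = 1 := by
    rw [cc6, cc12]; linear_combination (1 / 4) * s5sq
  unfold r1 r2 r3 r4 r5 r6 r7 r8
  rw [hb, hc, hd, cc9]
  refine ⟨?_, ?_, ?_, ?_, ?_, ?_, ?_, ?_⟩ <;> field_simp
  · linear_combination a * cc 13 * h6
  · linear_combination a * cc 14 * h6


end Triacontagonal
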